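/- arXiv:1010.5024 — 3 statements merged into one kernel-verified Lean document; each statement's English description precedes it below -/
import Mathlib

section
/- There exists a constant C > 0 such that the following holds: for every ε ∈ (0,1) and every family of real numbers (a_k)_{k ∈ ℤ²∖{0}} for which the right-hand side below is finite, Σ_{k ∈ ℤ², k ≠ 0} |a_k| ≤ C ( ε^{−1/4} ( Σ_{k ≠ 0} (1 + ‖k‖²) a_k² )^{1/2} + e^{−ε^{−1/4}} ( Σ_{k ≠ 0} (1 + ‖k‖²)² a_k² )^{1/2} ), where ‖k‖² = k₁² + k₂². (This is the Fourier-coefficient form of the Brezis–Gallouet-type inequality ‖w‖_{L^∞} ≤ C(‖w‖_{H¹} ε^{−1/4} + ‖w‖_{H²} e^{−1/ε^{1/4}}) on the two-dimensional torus.) -/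
open scoped ENNReal

/-- Squared norm of a lattice point. -/
def latNormSq (k : ℤ × ℤ) : ℝ := (k.1 : ℝ) ^ 2 + (k.2 : ℝ) ^ 2

/-!
Cut the lattice at sup-norm height `N = ⌊e ^ L⌋`, where `L = ε ^ (-1/4)`, and apply a weighted
Cauchy–Schwarz inequality on each side, with weight `1 + ‖k‖²` on the low modes and `(1 + ‖k‖²)²` on
the high ones. The sphere of sup-norm radius `n` has `8 n` points, so the inverse weights sum to
`O(∑_{n ≤ N} 1 / n) = O(L)` on the low modes (two dimensions being critical, the sum diverges only
logarithmically) and to `O(∑_{n > N} n⁻³) = O(e ^ (-2 L))` on the high ones.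
-/

section CauchySchwarz

variable {ι : Type*}

lemma tsum_mul_le_Lp_mul_Lq {p q : ℝ} (hpq : p.HolderConjugate q) (f g : ι → ℝ≥0∞) :
    ∑' i, f i * g i ≤ (∑' i, f i ^ p) ^ (1 / p) * (∑' i, g i ^ q) ^ (1 / q) := by
  rw [ENNReal.tsum_eq_iSup_sum]
  refine iSup_le fun s => (ENNReal.inner_le_Lp_mul_Lq s f g hpq).trans ?_
  have hp : 0 ≤ 1 / p := hpq.one_div_nonneg
  have hq : 0 ≤ 1 / q := hpq.symm.one_div_nonneg
  gcongr <;> exact ENNReal.sum_le_tsum s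

lemma tsum_ofReal_abs_le_weighted {w : ι → ℝ} (hw : ∀ i, 0 < w i) (a : ι → ℝ) :
    ∑' i, ENNReal.ofReal |a i| ≤
      (∑' i, ENNReal.ofReal (w i)⁻¹) ^ ((1 : ℝ) / 2) *
        (∑' i, ENNReal.ofReal (w i * a i ^ 2)) ^ ((1 : ℝ) / 2) := by
  have h_mul (i : ι) : ENNReal.ofReal |a i| =
      ENNReal.ofReal √(w i)⁻¹ * ENNReal.ofReal (√(w i) * |a i|) := by
    rw [← ENNReal.ofReal_mul (Real.sqrt_nonneg _), Real.sqrt_inv,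
      inv_mul_cancel_left₀ (Real.sqrt_pos.2 (hw i)).ne']
  have h_left (i : ι) : ENNReal.ofReal (w i)⁻¹ = ENNReal.ofReal √(w i)⁻¹ ^ (2 : ℝ) := by
    rw [ENNReal.rpow_two, ← ENNReal.ofReal_pow (Real.sqrt_nonneg _),
      Real.sq_sqrt (inv_pos.2 (hw i)).le]
  have h_right (i : ι) :
      ENNReal.ofReal (w i * a i ^ 2) = ENNReal.ofReal (√(w i) * |a i|) ^ (2 : ℝ) := by
    rw [ENNReal.rpow_two, ← ENNReal.ofReal_pow (by positivity), mul_pow, sq_abs,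
      Real.sq_sqrt (hw i).le]
  simp only [h_mul, h_left, h_right]
  exact tsum_mul_le_Lp_mul_Lq .two_two _ _

lemma tsum_inter_ofReal_abs_le_weighted {w : ι → ℝ} (hw : ∀ i, 0 < w i) (a : ι → ℝ) (S T : Set ι) :
    ∑' i : ↥(S ∩ T), ENNReal.ofReal |a i| ≤
      (∑' i : T, ENNReal.ofReal (w i)⁻¹) ^ ((1 : ℝ) / 2) *
        (∑' i : S, ENNReal.ofReal (w i * a i ^ 2)) ^ ((1 : ℝ) / 2) := by
  refine (tsum_ofReal_abs_le_weighted (fun i : ↥(S ∩ T) => hw i) fun i => a i).trans ?_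
  gcongr
  · exact ENNReal.tsum_mono_subtype (fun i => ENNReal.ofReal (w i)⁻¹) Set.inter_subset_right
  · exact ENNReal.tsum_mono_subtype (fun i => ENNReal.ofReal (w i * a i ^ 2))
      Set.inter_subset_left

lemma rpow_half_le_ofReal {x : ℝ≥0∞} {c : ℝ} (hc : 0 ≤ c) (h : x ≤ ENNReal.ofReal (c ^ 2)) :
    x ^ ((1 : ℝ) / 2) ≤ ENNReal.ofReal c := by
  calc x ^ ((1 : ℝ) / 2) ≤ ENNReal.ofReal (c ^ 2) ^ ((1 : ℝ) / 2) := by gcongr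
    _ = ENNReal.ofReal c := by
      rw [ENNReal.ofReal_rpow_of_nonneg (sq_nonneg c) (by norm_num), ← Real.sqrt_eq_rpow,
        Real.sqrt_sq hc]

end CauchySchwarz

section Lattice

open Finset

/-- The sup norm on `ℤ²`, as a natural number; its spheres are the `Finset.box`es, over which the
lattice sums are split. -/
def latSupNorm (k : ℤ × ℤ) : ℕ := max k.1.natAbs k.2.natAbs

lemma sq_latSupNorm_le_latNormSq (k : ℤ × ℤ) : (latSupNorm k : ℝ) ^ 2 ≤ latNormSq k := by
  have h_sq (z : ℤ) : (z.natAbs : ℝ) ^ 2 = (z : ℝ) ^ 2 := by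
    rw [Nat.cast_natAbs, Int.cast_abs, sq_abs]
  unfold latSupNorm latNormSq
  rcases max_choice k.1.natAbs k.2.natAbs with h | h <;> rw [h, h_sq]
  · exact le_add_of_nonneg_right (sq_nonneg _)
  · exact le_add_of_nonneg_left (sq_nonneg _)

lemma one_add_latNormSq_pos (k : ℤ × ℤ) : 0 < 1 + latNormSq k := by
  unfold latNormSq
  positivity

lemma preimage_latSupNorm_singleton (n : ℕ) : latSupNorm ⁻¹' {n} = ↑(box n : Finset (ℤ × ℤ)) := by
  ext k
  exact Int.mem_box.symm

lemma tsum_comp_latSupNorm (g : ℕ → ℝ≥0∞) :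
    ∑' k, g (latSupNorm k) = ∑' n, #(box n : Finset (ℤ × ℤ)) * g n := by
  rw [← ENNReal.tsum_fiberwise _ latSupNorm]
  refine tsum_congr fun n => ?_
  calc ∑' k : latSupNorm ⁻¹' {n}, g (latSupNorm k)
      = ∑' _ : latSupNorm ⁻¹' {n}, g n := tsum_congr fun k => congrArg g k.2
    _ = ∑ _ ∈ (box n : Finset (ℤ × ℤ)), g n := by
        rw [preimage_latSupNorm_singleton]
        exact Finset.tsum_subtype _ fun _ => g n
    _ = #(box n : Finset (ℤ × ℤ)) * g n := by rw [sum_const, nsmul_eq_mul]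

lemma tsum_preimage_latSupNorm (T : Set ℕ) (g : ℕ → ℝ≥0∞) :
    ∑' k : latSupNorm ⁻¹' T, g (latSupNorm k) = ∑' n : T, #(box n : Finset (ℤ × ℤ)) * g n := by
  calc ∑' k : latSupNorm ⁻¹' T, g (latSupNorm k)
      = ∑' k, T.indicator g (latSupNorm k) := by
        rw [_root_.tsum_subtype (latSupNorm ⁻¹' T) fun k => g (latSupNorm k)]
        rfl
    _ = ∑' n, #(box n : Finset (ℤ × ℤ)) * T.indicator g n := tsum_comp_latSupNorm _
    _ = ∑' n : T, #(box n : Finset (ℤ × ℤ)) * g n := by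
        rw [_root_.tsum_subtype T fun n => #(box n : Finset (ℤ × ℤ)) * g n]
        simp only [Set.indicator_mul_right]

lemma card_box_succ_mul_ofReal_inv_le (n : ℕ) :
    #(box (n + 1) : Finset (ℤ × ℤ)) * ENNReal.ofReal (1 + ((n + 1 : ℕ) : ℝ) ^ 2)⁻¹ ≤
      ENNReal.ofReal (8 * ((n : ℝ) + 1)⁻¹) := by
  rw [Int.card_box n.succ_ne_zero, ← ENNReal.ofReal_natCast, ← ENNReal.ofReal_mul (by positivity)]
  refine ENNReal.ofReal_le_ofReal ?_
  push_cast
  rw [← div_eq_mul_inv, ← div_eq_mul_inv, div_le_div_iff₀ (by positivity) (by positivity)]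
  linarith

lemma tsum_Iic_inv_one_add_latNormSq_le (N : ℕ) :
    ∑' k : latSupNorm ⁻¹' Set.Iic N, ENNReal.ofReal (1 + latNormSq k)⁻¹ ≤
      ENNReal.ofReal (9 + 8 * Real.log N) := by
  have h_harmonic : ∑ n ∈ range N, ((n : ℝ) + 1)⁻¹ ≤ 1 + Real.log N := by
    simpa [harmonic] using harmonic_le_one_add_log N
  calc ∑' k : latSupNorm ⁻¹' Set.Iic N, ENNReal.ofReal (1 + latNormSq k)⁻¹
      ≤ ∑' k : latSupNorm ⁻¹' Set.Iic N, ENNReal.ofReal (1 + (latSupNorm k : ℝ) ^ 2)⁻¹ := by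
        refine ENNReal.tsum_le_tsum fun k => ?_
        gcongr
        exact sq_latSupNorm_le_latNormSq k
    _ = ∑ n ∈ range (N + 1),
          #(box n : Finset (ℤ × ℤ)) * ENNReal.ofReal (1 + (n : ℝ) ^ 2)⁻¹ := by
        rw [tsum_preimage_latSupNorm _ fun n => ENNReal.ofReal (1 + (n : ℝ) ^ 2)⁻¹,
          Nat.range_succ_eq_Iic, ← Finset.coe_Iic]
        exact Finset.tsum_subtype _ fun n =>
          #(box n : Finset (ℤ × ℤ)) * ENNReal.ofReal (1 + (n : ℝ) ^ 2)⁻¹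
    _ ≤ ∑ n ∈ range N, ENNReal.ofReal (8 * ((n : ℝ) + 1)⁻¹) + ENNReal.ofReal 1 := by
        rw [sum_range_succ']
        gcongr with n
        · exact card_box_succ_mul_ofReal_inv_le n
        · simp
    _ = ENNReal.ofReal (8 * ∑ n ∈ range N, ((n : ℝ) + 1)⁻¹ + 1) := by
        rw [mul_sum, ENNReal.ofReal_add (by positivity) one_pos.le,
          ENNReal.ofReal_sum_of_nonneg fun n _ => by positivity]
    _ ≤ ENNReal.ofReal (9 + 8 * Real.log N) := ENNReal.ofReal_le_ofReal (by linarith)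

lemma tsum_Ioi_ofReal_inv_sq_le (N : ℕ) :
    ∑' n : Set.Ioi N, ENNReal.ofReal ((n : ℝ) ^ 2)⁻¹ ≤ ENNReal.ofReal (2 / (N + 1)) := by
  rw [_root_.tsum_subtype _ fun n : ℕ => ENNReal.ofReal ((n : ℝ) ^ 2)⁻¹]
  refine ENNReal.tsum_le_of_sum_range_le fun M => ?_
  have h_filter : {n ∈ range M | n ∈ Set.Ioi N} = Ioo N M := by
    ext n
    simp [and_comm]
  rw [sum_indicator_eq_sum_filter, h_filter,
    ← ENNReal.ofReal_sum_of_nonneg fun n _ => by positivity]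
  exact ENNReal.ofReal_le_ofReal (sum_Ioo_inv_sq_le N M)

lemma card_box_mul_ofReal_inv_sq_sq_le {N n : ℕ} (hn : N < n) :
    #(box n : Finset (ℤ × ℤ)) * ENNReal.ofReal (((n : ℝ) ^ 2) ^ 2)⁻¹ ≤
      ENNReal.ofReal (8 / (N + 1)) * ENNReal.ofReal ((n : ℝ) ^ 2)⁻¹ := by
  have hn_pos : (0 : ℝ) < n := by exact_mod_cast Nat.zero_lt_of_lt hn
  have hNn : (N : ℝ) + 1 ≤ n := by exact_mod_cast hn
  rw [Int.card_box (Nat.ne_zero_of_lt hn), ← ENNReal.ofReal_natCast,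
    ← ENNReal.ofReal_mul (by positivity), ← ENNReal.ofReal_mul (by positivity)]
  refine ENNReal.ofReal_le_ofReal ?_
  calc ((8 * n : ℕ) : ℝ) * (((n : ℝ) ^ 2) ^ 2)⁻¹ = 8 / n * ((n : ℝ) ^ 2)⁻¹ := by
        push_cast
        field_simp
    _ ≤ 8 / (N + 1) * ((n : ℝ) ^ 2)⁻¹ := by gcongr

lemma tsum_Ioi_inv_one_add_latNormSq_sq_le (N : ℕ) :
    ∑' k : latSupNorm ⁻¹' Set.Ioi N, ENNReal.ofReal ((1 + latNormSq k) ^ 2)⁻¹ ≤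
      ENNReal.ofReal ((4 / (N + 1)) ^ 2) := by
  calc ∑' k : latSupNorm ⁻¹' Set.Ioi N, ENNReal.ofReal ((1 + latNormSq k) ^ 2)⁻¹
      ≤ ∑' k : latSupNorm ⁻¹' Set.Ioi N, ENNReal.ofReal (((latSupNorm k : ℝ) ^ 2) ^ 2)⁻¹ := by
        refine ENNReal.tsum_le_tsum fun k => ?_
        have hk : (0 : ℝ) < latSupNorm k := by exact_mod_cast Nat.zero_lt_of_lt k.2
        gcongr
        linarith [sq_latSupNorm_le_latNormSq k]
    _ = ∑' n : Set.Ioi N,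
          #(box n : Finset (ℤ × ℤ)) * ENNReal.ofReal (((n : ℝ) ^ 2) ^ 2)⁻¹ :=
        tsum_preimage_latSupNorm _ fun n => ENNReal.ofReal (((n : ℝ) ^ 2) ^ 2)⁻¹
    _ ≤ ∑' n : Set.Ioi N, ENNReal.ofReal (8 / (N + 1)) * ENNReal.ofReal ((n : ℝ) ^ 2)⁻¹ :=
        ENNReal.tsum_le_tsum fun n => card_box_mul_ofReal_inv_sq_sq_le n.2
    _ ≤ ENNReal.ofReal (8 / (N + 1)) * ENNReal.ofReal (2 / (N + 1)) := by
        rw [ENNReal.tsum_mul_left]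
        gcongr
        exact tsum_Ioi_ofReal_inv_sq_le N
    _ = ENNReal.ofReal ((4 / (N + 1)) ^ 2) := by
        rw [← ENNReal.ofReal_mul (by positivity)]
        ring_nf

end Lattice

lemma tsum_ofReal_abs_le_low_add_high (N : ℕ) (S : Set (ℤ × ℤ)) (a : ℤ × ℤ → ℝ) :
    ∑' k : S, ENNReal.ofReal |a k| ≤
      ENNReal.ofReal √(9 + 8 * Real.log N) *
          (∑' k : S, ENNReal.ofReal ((1 + latNormSq k) * a k ^ 2)) ^ ((1 : ℝ) / 2)
        + ENNReal.ofReal (4 / (N + 1)) *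
          (∑' k : S, ENNReal.ofReal ((1 + latNormSq k) ^ 2 * a k ^ 2)) ^ ((1 : ℝ) / 2) := by
  set low : Set (ℤ × ℤ) := latSupNorm ⁻¹' Set.Iic N
  set high : Set (ℤ × ℤ) := latSupNorm ⁻¹' Set.Ioi N
  have h_cover : S ⊆ S ∩ low ∪ S ∩ high := fun k hk =>
    (le_or_gt (latSupNorm k) N).imp (⟨hk, ·⟩) (⟨hk, ·⟩)
  calc ∑' k : S, ENNReal.ofReal |a k|
      ≤ ∑' k : ↥(S ∩ low), ENNReal.ofReal |a k| + ∑' k : ↥(S ∩ high), ENNReal.ofReal |a k| :=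
        (ENNReal.tsum_mono_subtype (fun k => ENNReal.ofReal |a k|) h_cover).trans
          (ENNReal.tsum_union_le (fun k => ENNReal.ofReal |a k|) _ _)
    _ ≤ _ := by
        gcongr
        · refine (tsum_inter_ofReal_abs_le_weighted one_add_latNormSq_pos a S low).trans ?_
          gcongr
          refine rpow_half_le_ofReal (Real.sqrt_nonneg _) ?_
          rw [Real.sq_sqrt (by linarith [Real.log_natCast_nonneg N])]
          exact tsum_Iic_inv_one_add_latNormSq_le N
        · refine (tsum_inter_ofReal_abs_le_weighted
            (fun k => pow_pos (one_add_latNormSq_pos k) 2) a S high).trans ?_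
          gcongr
          exact rpow_half_le_ofReal (by positivity) (tsum_Ioi_inv_one_add_latNormSq_sq_le N)

theorem stmt4_general {L : ℝ} (hL : 1 ≤ L) (S : Set (ℤ × ℤ)) (a : ℤ × ℤ → ℝ) :
    ∑' k : S, ENNReal.ofReal |a k| ≤
      ENNReal.ofReal 5 *
        (ENNReal.ofReal L *
            (∑' k : S, ENNReal.ofReal ((1 + latNormSq k) * a k ^ 2)) ^ ((1 : ℝ) / 2)
          + ENNReal.ofReal (Real.exp (-L)) *
            (∑' k : S, ENNReal.ofReal ((1 + latNormSq k) ^ 2 * a k ^ 2)) ^ ((1 : ℝ) / 2)) := by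
  have h_floor_pos : 0 < ⌊Real.exp L⌋₊ := Nat.floor_pos.2 (Real.one_le_exp (by linarith))
  have h_low : √(9 + 8 * Real.log ⌊Real.exp L⌋₊) ≤ 5 * L := by
    have h_log : Real.log ⌊Real.exp L⌋₊ ≤ L :=
      (Real.log_le_iff_le_exp (by exact_mod_cast h_floor_pos)).2
        (Nat.floor_le (Real.exp_pos L).le)
    refine Real.sqrt_le_iff.2 ⟨by linarith, ?_⟩
    calc 9 + 8 * Real.log ⌊Real.exp L⌋₊ ≤ 9 + 8 * L := by gcongr
      _ ≤ (5 * L) ^ 2 := by nlinarith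
  have h_high : 4 / ((⌊Real.exp L⌋₊ : ℝ) + 1) ≤ 5 * Real.exp (-L) := by
    rw [Real.exp_neg, ← div_eq_mul_inv]
    gcongr
    · norm_num
    · exact (Nat.lt_floor_add_one _).le
  refine (tsum_ofReal_abs_le_low_add_high ⌊Real.exp L⌋₊ S a).trans ?_
  rw [mul_add, ← mul_assoc, ← mul_assoc, ← ENNReal.ofReal_mul (by norm_num),
    ← ENNReal.ofReal_mul (by norm_num)]
  gcongr

theorem stmt4 :
    ∃ C : ℝ, 0 < C ∧
      ∀ (ε : ℝ), ε ∈ Set.Ioo (0 : ℝ) 1 →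
        ∀ a : ℤ × ℤ → ℝ,
          (∑' k : {k : ℤ × ℤ // k ≠ 0},
              ENNReal.ofReal ((1 + latNormSq k.1) * (a k.1) ^ 2)) ≠ ⊤ →
          (∑' k : {k : ℤ × ℤ // k ≠ 0},
              ENNReal.ofReal ((1 + latNormSq k.1) ^ 2 * (a k.1) ^ 2)) ≠ ⊤ →
          (∑' k : {k : ℤ × ℤ // k ≠ 0}, ENNReal.ofReal |a k.1|)
            ≤ ENNReal.ofReal C *
              (ENNReal.ofReal (ε ^ (-(1 / 4) : ℝ)) *
                  (∑' k : {k : ℤ × ℤ // k ≠ 0},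
                    ENNReal.ofReal ((1 + latNormSq k.1) * (a k.1) ^ 2)) ^ ((1 : ℝ) / 2)
                + ENNReal.ofReal (Real.exp (-(ε ^ (-(1 / 4) : ℝ)))) *
                  (∑' k : {k : ℤ × ℤ // k ≠ 0},
                    ENNReal.ofReal ((1 + latNormSq k.1) ^ 2 * (a k.1) ^ 2)) ^ ((1 : ℝ) / 2)) := by
  exact ⟨5, by norm_num, fun ε hε a _ _ => stmt4_general
    (Real.one_le_rpow_of_pos_of_le_one_of_nonpos hε.1 hε.2.le (by norm_num)) {k | k ≠ 0} a⟩
end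

section
/- Let u : ℝ² → ℝ² be a smooth ℤ²-periodic divergence-free vector field (∂₁u¹ + ∂₂u² = 0). Then ∫_Q (u·∇u)·Δu dx = 0, where Q = [0,1]², (u·∇u)ⁱ = Σ_j uʲ ∂_j uⁱ, and (Δu)ⁱ = ∂₁²uⁱ + ∂₂²uⁱ. (This is the two-dimensional periodic orthogonality identity (B(u,u), Au) = 0 used for the H¹ energy estimate.) -/
/-!
For a scalar function `f` and a vector field `u` with Jacobian matrix `J`, Rellich's identity
`div ((u·∇f) ∇f - |∇f|²/2 u) = (u·∇f) Δf + ∇f · J ∇f - (tr J) |∇f|²/2`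
holds because the second derivatives of `f` outside `Δf` cancel by symmetry. Over a period cell
the left-hand side integrates to zero. Taking `f = uⁱ` and summing over `i` turns the cubic term
into `tr (J J Jᵀ)`. In the plane, Cayley-Hamilton gives `J² = (tr J) J - (det J) 1`, hence
`∫ (u·∇u)·Δu = ∫ (tr J) (det J - tr (J Jᵀ) / 2)`, and `tr J = div u`.
-/

open MeasureTheory

/-- Partial derivative in direction `j`. -/
noncomputable def pd (j : Fin 2) (f : (Fin 2 → ℝ) → ℝ) (x : Fin 2 → ℝ) : ℝ :=
  fderiv ℝ f x (Pi.single j 1)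

/-- `f` is `ℤ²`-periodic. -/
def Periodic2 (f : (Fin 2 → ℝ) → ℝ) : Prop :=
  ∀ (x : Fin 2 → ℝ) (k : Fin 2 → ℤ), f (x + fun i => (k i : ℝ)) = f x

/-- The fundamental domain `Q = [0,1]²`. -/
def Q2 : Set (Fin 2 → ℝ) := Set.Icc 0 1

/-- The partial derivative `∂ⱼf` of a function of finitely many real variables, with values in a
normed space. It extends `pd` to all dimensions. -/
noncomputable def partialDeriv {ι F : Type*} [DecidableEq ι] [NormedAddCommGroup F]
    [NormedSpace ℝ F] (j : ι) (f : (ι → ℝ) → F) (x : ι → ℝ) : F :=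
  fderiv ℝ f x (Pi.single j 1)

local notation "∂[" j "]" => partialDeriv j

section PartialDeriv

variable {ι F : Type*} [DecidableEq ι] [NormedAddCommGroup F] [NormedSpace ℝ F]

section Finite

variable [Finite ι]

lemma periodic_partialDeriv {f : (ι → ℝ) → F} {c : ι → ℝ} (hf : Function.Periodic f c) (j : ι) :
    Function.Periodic (∂[j] f) c := by
  intro x
  cases nonempty_fintype ι
  simp only [partialDeriv, ← fderiv_comp_add_right, hf _]

lemma partialDeriv_sub {f g : (ι → ℝ) → F} {x : ι → ℝ} (hf : DifferentiableAt ℝ f x)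
    (hg : DifferentiableAt ℝ g x) (j : ι) :
    ∂[j] (fun y => f y - g y) x = ∂[j] f x - ∂[j] g x := by
  cases nonempty_fintype ι
  simp [partialDeriv, fderiv_fun_sub hf hg]

lemma partialDeriv_sum {α : Type*} {s : Finset α} {f : α → (ι → ℝ) → F} {x : ι → ℝ}
    (hf : ∀ a ∈ s, DifferentiableAt ℝ (f a) x) (j : ι) :
    ∂[j] (fun y => ∑ a ∈ s, f a y) x = ∑ a ∈ s, ∂[j] (f a) x := by
  cases nonempty_fintype ι
  simp [partialDeriv, fderiv_fun_sum hf]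

lemma partialDeriv_mul {f g : (ι → ℝ) → ℝ} {x : ι → ℝ} (hf : DifferentiableAt ℝ f x)
    (hg : DifferentiableAt ℝ g x) (j : ι) :
    ∂[j] (fun y => f y * g y) x = ∂[j] f x * g x + f x * ∂[j] g x := by
  cases nonempty_fintype ι
  simp only [partialDeriv, fderiv_fun_mul hf hg, add_apply, smul_apply, smul_eq_mul]
  ring

end Finite

variable [Fintype ι]

lemma contDiff_partialDeriv {m n : WithTop ℕ∞} {f : (ι → ℝ) → F} (hf : ContDiff ℝ n f)
    (hmn : m + 1 ≤ n) (j : ι) : ContDiff ℝ m (∂[j] f) :=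
  (hf.fderiv_right hmn).clm_apply contDiff_const

lemma continuous_partialDeriv {f : (ι → ℝ) → F} (hf : ContDiff ℝ 1 f) (j : ι) :
    Continuous (∂[j] f) :=
  (contDiff_partialDeriv hf (zero_add 1).le j).continuous

lemma differentiable_partialDeriv {f : (ι → ℝ) → F} (hf : ContDiff ℝ 2 f) (j : ι) :
    Differentiable ℝ (∂[j] f) :=
  (contDiff_partialDeriv hf one_add_one_eq_two.le j).differentiable one_ne_zero

lemma partialDeriv_comm {f : (ι → ℝ) → F} (hf : ContDiff ℝ 2 f) (i j : ι) (x : ι → ℝ) :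
    ∂[i] (∂[j] f) x = ∂[j] (∂[i] f) x := by
  have hdiff : DifferentiableAt ℝ (fderiv ℝ f) x :=
    (hf.fderiv_right one_add_one_eq_two.le).differentiable one_ne_zero x
  have hsecond (k l : ι) :
      ∂[k] (∂[l] f) x = fderiv ℝ (fderiv ℝ f) x (Pi.single k 1) (Pi.single l 1) := by
    change fderiv ℝ (fun y => fderiv ℝ f y (Pi.single l 1)) x (Pi.single k 1) = _
    simp [fderiv_clm_apply hdiff (differentiableAt_const _)]
  rw [hsecond, hsecond]
  exact (hf.contDiffAt.isSymmSndFDerivAt (by simp)).eq _ _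

end PartialDeriv

section Rellich

open scoped Matrix

variable {ι : Type*} [Fintype ι] [DecidableEq ι] {u : (ι → ℝ) → ι → ℝ} {f : (ι → ℝ) → ℝ}

/-- The gradient `∇f` as a coordinate vector; Mathlib's `gradient` needs an inner product space,
which `ι → ℝ` is not. -/
noncomputable def coordGradient (f : (ι → ℝ) → ℝ) (x : ι → ℝ) : ι → ℝ :=
  fun j => ∂[j] f x

/-- The squared Euclidean length `|∇f|²` of the gradient. -/
noncomputable def gradientSq (f : (ι → ℝ) → ℝ) (x : ι → ℝ) : ℝ :=
  coordGradient f x ⬝ᵥ coordGradient f x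

/-- The Laplacian `Δf` in coordinates; as with `coordGradient`, Mathlib's own notion needs an inner
product space. -/
noncomputable def coordLaplacian (f : (ι → ℝ) → ℝ) (x : ι → ℝ) : ℝ :=
  ∑ k, ∂[k] (∂[k] f) x

/-- The Jacobian matrix of the vector field `u`; row `i` is the gradient of `uⁱ`, and the trace is
the divergence of `u`. -/
noncomputable def jacobianMatrix (u : (ι → ℝ) → ι → ℝ) (x : ι → ℝ) : Matrix ι ι ℝ :=
  Matrix.of fun i => coordGradient (fun y => u y i) x

/-- The derivative `u·∇f` of the scalar function `f` along the vector field `u`. -/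
noncomputable def advection (u : (ι → ℝ) → ι → ℝ) (f : (ι → ℝ) → ℝ) (x : ι → ℝ) : ℝ :=
  u x ⬝ᵥ coordGradient f x

/-- The `k`-th component of the field `(u·∇f) ∇f - |∇f|²/2 u` in Rellich's identity. -/
noncomputable def rellichFlux (u : (ι → ℝ) → ι → ℝ) (f : (ι → ℝ) → ℝ) (k : ι) (x : ι → ℝ) : ℝ :=
  advection u f x * ∂[k] f x - u x k * (1 / 2 * gradientSq f x)

lemma contDiff_advection (hu : ContDiff ℝ 1 u) (hf : ContDiff ℝ 2 f) :
    ContDiff ℝ 1 (advection u f) :=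
  ContDiff.sum fun j _ =>
    (contDiff_pi.1 hu j).mul (contDiff_partialDeriv hf one_add_one_eq_two.le j)

lemma contDiff_gradientSq (hf : ContDiff ℝ 2 f) : ContDiff ℝ 1 (gradientSq f) :=
  ContDiff.sum fun j _ =>
    have hj := contDiff_partialDeriv hf one_add_one_eq_two.le j
    hj.mul hj

lemma contDiff_rellichFlux (hu : ContDiff ℝ 1 u) (hf : ContDiff ℝ 2 f) (k : ι) :
    ContDiff ℝ 1 (rellichFlux u f k) :=
  ((contDiff_advection hu hf).mul (contDiff_partialDeriv hf one_add_one_eq_two.le k)).sub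
    ((contDiff_pi.1 hu k).mul (contDiff_const.mul (contDiff_gradientSq hf)))

lemma continuous_coordGradient (hf : ContDiff ℝ 1 f) : Continuous (coordGradient f) :=
  continuous_pi fun j => continuous_partialDeriv hf j

lemma continuous_coordLaplacian (hf : ContDiff ℝ 2 f) : Continuous (coordLaplacian f) :=
  continuous_finsetSum _ fun k _ =>
    continuous_partialDeriv (contDiff_partialDeriv hf one_add_one_eq_two.le k) k

lemma continuous_jacobianMatrix (hu : ContDiff ℝ 1 u) : Continuous (jacobianMatrix u) :=
  continuous_matrix fun i j => continuous_partialDeriv (contDiff_pi.1 hu i) j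

lemma continuous_advection_mul_coordLaplacian (hu : ContDiff ℝ 1 u) (hf : ContDiff ℝ 2 f) :
    Continuous fun x => advection u f x * coordLaplacian f x :=
  (contDiff_advection hu hf).continuous.mul (continuous_coordLaplacian hf)

lemma continuous_trace_mul_sub_dotProduct_mulVec (hu : ContDiff ℝ 1 u) (hf : ContDiff ℝ 2 f) :
    Continuous fun x => (jacobianMatrix u x).trace * (1 / 2 * gradientSq f x)
      - coordGradient f x ⬝ᵥ (jacobianMatrix u x *ᵥ coordGradient f x) :=
  have hJ := continuous_jacobianMatrix hu
  have hgrad := continuous_coordGradient (hf.of_le one_le_two)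
  (hJ.matrix_trace.mul (continuous_const.mul (contDiff_gradientSq hf).continuous)).sub
    (hgrad.dotProduct (hJ.matrix_mulVec hgrad))

lemma periodic_rellichFlux {c : ι → ℝ} (hu : Function.Periodic u c) (hf : Function.Periodic f c)
    (k : ι) : Function.Periodic (rellichFlux u f k) c := fun x => by
  simp only [rellichFlux, advection, gradientSq, dotProduct, coordGradient, hu x,
    periodic_partialDeriv hf _ x]

lemma partialDeriv_advection (hu : ContDiff ℝ 1 u) (hf : ContDiff ℝ 2 f) (k : ι) (x : ι → ℝ) :
    ∂[k] (advection u f) x =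
      (coordGradient f x ᵥ* jacobianMatrix u x) k + advection u (∂[k] f) x := by
  have hdu (j : ι) : DifferentiableAt ℝ (fun y => u y j) x :=
    (contDiff_pi.1 hu j).differentiable one_ne_zero x
  have hdf (j : ι) : DifferentiableAt ℝ (∂[j] f) x := differentiable_partialDeriv hf j x
  calc ∂[k] (advection u f) x = ∑ j, ∂[k] (fun y => u y j * ∂[j] f y) x :=
        partialDeriv_sum (fun j _ => (hdu j).mul (hdf j)) k
    _ = ∑ j, (∂[j] f x * ∂[k] (fun y => u y j) x + u x j * ∂[j] (∂[k] f) x) := by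
        simp only [partialDeriv_mul (hdu _) (hdf _), partialDeriv_comm hf k, mul_comm (∂[_] f x)]
    _ = _ := Finset.sum_add_distrib

lemma half_partialDeriv_gradientSq (hf : ContDiff ℝ 2 f) (k : ι) (x : ι → ℝ) :
    1 / 2 * ∂[k] (gradientSq f) x = ∑ j, ∂[j] f x * ∂[k] (∂[j] f) x := by
  have hdf (j : ι) : DifferentiableAt ℝ (∂[j] f) x := differentiable_partialDeriv hf j x
  have hsum : ∂[k] (gradientSq f) x = ∑ j, ∂[k] (fun y => ∂[j] f y * ∂[j] f y) x :=
    partialDeriv_sum (fun j _ => (hdf j).mul (hdf j)) k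
  rw [hsum, Finset.mul_sum]
  refine Finset.sum_congr rfl fun j _ => ?_
  rw [partialDeriv_mul (hdf j) (hdf j)]
  ring

lemma sum_advection_partialDeriv_mul (hf : ContDiff ℝ 2 f) (x : ι → ℝ) :
    ∑ k, advection u (∂[k] f) x * ∂[k] f x = 1 / 2 * advection u (gradientSq f) x := by
  calc ∑ k, advection u (∂[k] f) x * ∂[k] f x
      = ∑ k, ∑ j, u x j * (∂[k] f x * ∂[j] (∂[k] f) x) := by
        simp only [advection, dotProduct, coordGradient, Finset.sum_mul, mul_assoc,
          mul_comm (∂[_] (∂[_] f) x)]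
    _ = ∑ j, u x j * (1 / 2 * ∂[j] (gradientSq f) x) := by
        rw [Finset.sum_comm]
        simp only [half_partialDeriv_gradientSq hf, Finset.mul_sum]
    _ = 1 / 2 * advection u (gradientSq f) x := by
        simp only [advection, dotProduct, coordGradient, Finset.mul_sum, mul_left_comm]

lemma partialDeriv_rellichFlux (hu : ContDiff ℝ 1 u) (hf : ContDiff ℝ 2 f) (k : ι) (x : ι → ℝ) :
    ∂[k] (rellichFlux u f k) x =
      advection u f x * ∂[k] (∂[k] f) x + (coordGradient f x ᵥ* jacobianMatrix u x) k * ∂[k] f x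
        - ∂[k] (fun y => u y k) x * (1 / 2 * gradientSq f x)
        + (advection u (∂[k] f) x * ∂[k] f x - 1 / 2 * (u x k * ∂[k] (gradientSq f) x)) := by
  have hadv : DifferentiableAt ℝ (advection u f) x :=
    (contDiff_advection hu hf).differentiable one_ne_zero x
  have hdf : DifferentiableAt ℝ (∂[k] f) x := differentiable_partialDeriv hf k x
  have hdu : DifferentiableAt ℝ (fun y => u y k) x :=
    (contDiff_pi.1 hu k).differentiable one_ne_zero x
  have hgrad : DifferentiableAt ℝ (gradientSq f) x :=
    (contDiff_gradientSq hf).differentiable one_ne_zero x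
  have hhalf : ∂[k] (fun y => 1 / 2 * gradientSq f y) x = 1 / 2 * ∂[k] (gradientSq f) x := by
    simp [partialDeriv, fderiv_const_mul hgrad]
  calc ∂[k] (rellichFlux u f k) x
      = ∂[k] (fun y => advection u f y * ∂[k] f y) x
          - ∂[k] (fun y => u y k * (1 / 2 * gradientSq f y)) x :=
        partialDeriv_sub (hadv.mul hdf) (hdu.mul (hgrad.const_mul _)) k
    _ = _ := by
        rw [partialDeriv_mul hadv hdf, partialDeriv_mul hdu (hgrad.const_mul _), hhalf,
          partialDeriv_advection hu hf]
        ring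

theorem sum_partialDeriv_rellichFlux (hu : ContDiff ℝ 1 u) (hf : ContDiff ℝ 2 f) (x : ι → ℝ) :
    ∑ k, ∂[k] (rellichFlux u f k) x =
      advection u f x * coordLaplacian f x
        + coordGradient f x ⬝ᵥ (jacobianMatrix u x *ᵥ coordGradient f x)
        - (jacobianMatrix u x).trace * (1 / 2 * gradientSq f x) := by
  have hcancel : ∑ k, (advection u (∂[k] f) x * ∂[k] f x
      - 1 / 2 * (u x k * ∂[k] (gradientSq f) x)) = 0 := by
    rw [Finset.sum_sub_distrib, sum_advection_partialDeriv_mul hf, ← Finset.mul_sum]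
    exact sub_self _
  simp only [partialDeriv_rellichFlux hu hf, Finset.sum_add_distrib, Finset.sum_sub_distrib,
    hcancel, add_zero, ← Finset.mul_sum, ← Finset.sum_mul, Matrix.dotProduct_mulVec]
  rfl

end Rellich

section Trace

open scoped Matrix

variable {ι R : Type*} [Fintype ι] [CommRing R]

lemma sum_dotProduct_mulVec_row (A : Matrix ι ι R) :
    ∑ i, A i ⬝ᵥ (A *ᵥ A i) = (A * (A * Aᵀ)).trace := rfl

lemma sum_dotProduct_self_row (A : Matrix ι ι R) : ∑ i, A i ⬝ᵥ A i = (A * Aᵀ).trace := rfl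

lemma trace_mul_mul_transpose_fin_two (A : Matrix (Fin 2) (Fin 2) R) :
    (A * (A * Aᵀ)).trace = A.trace * ((A * Aᵀ).trace - A.det) := by
  have hcayley : A * A = A.trace • A - A.det • 1 := by
    nontriviality R
    have h := A.aeval_self_charpoly
    simp only [Matrix.charpoly_fin_two, map_add, map_sub, map_mul, Polynomial.aeval_X,
      Polynomial.aeval_C, Algebra.algebraMap_eq_smul_one, smul_mul_assoc, one_mul, sq] at h
    rw [← sub_eq_zero, ← h]
    abel
  rw [← Matrix.mul_assoc, hcayley]
  simp [Matrix.sub_mul, mul_sub, mul_comm]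

end Trace

section Integral

open scoped Matrix

variable {n : ℕ} {a b : Fin (n + 1) → ℝ}

theorem integral_sum_partialDeriv_eq_zero_of_periodic {F : Type*} [NormedAddCommGroup F]
    [NormedSpace ℝ F] {G : Fin (n + 1) → (Fin (n + 1) → ℝ) → F} (hab : a ≤ b)
    (hG : ∀ k, Differentiable ℝ (G k))
    (hint : IntegrableOn (fun x => ∑ k, ∂[k] (G k) x) (Set.Icc a b))
    (hper : ∀ k, Function.Periodic (G k) (Pi.single k (b k - a k))) :
    ∫ x in Set.Icc a b, ∑ k, ∂[k] (G k) x = 0 := by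
  have hdivergence := integral_divergence_of_hasFDerivAt_off_countable' a b hab G
    (fun k => fderiv ℝ (G k)) ∅ Set.countable_empty (fun k => (hG k).continuous.continuousOn)
    (fun x _ k => (hG k x).hasFDerivAt) hint
  have hfaces (k : Fin (n + 1)) (y : Fin n → ℝ) :
      G k (k.insertNth (b k) y) = G k (k.insertNth (a k) y) := by
    have hshift : k.insertNth (b k) y =
        k.insertNth (a k) y + (Pi.single k (b k - a k) : Fin (n + 1) → ℝ) := by
      ext i
      cases i using Fin.succAboveCases k <;> simp
    rw [hshift, hper k]
  refine hdivergence.trans (Finset.sum_eq_zero fun k _ => ?_)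
  simp only [hfaces, sub_self]

theorem integral_advection_mul_coordLaplacian (hab : a ≤ b)
    {u : (Fin (n + 1) → ℝ) → Fin (n + 1) → ℝ} (hu : ContDiff ℝ 1 u)
    (hup : ∀ k, Function.Periodic u (Pi.single k (b k - a k)))
    {f : (Fin (n + 1) → ℝ) → ℝ} (hf : ContDiff ℝ 2 f)
    (hfp : ∀ k, Function.Periodic f (Pi.single k (b k - a k))) :
    ∫ x in Set.Icc a b, advection u f x * coordLaplacian f x =
      ∫ x in Set.Icc a b, ((jacobianMatrix u x).trace * (1 / 2 * gradientSq f x)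
        - coordGradient f x ⬝ᵥ (jacobianMatrix u x *ᵥ coordGradient f x)) := by
  have hflux_cont : Continuous fun x => ∑ k, ∂[k] (rellichFlux u f k) x :=
    continuous_finsetSum _ fun k _ => continuous_partialDeriv (contDiff_rellichFlux hu hf k) k
  have hflux : ∫ x in Set.Icc a b, ∑ k, ∂[k] (rellichFlux u f k) x = 0 :=
    integral_sum_partialDeriv_eq_zero_of_periodic hab
      (fun k => (contDiff_rellichFlux hu hf k).differentiable one_ne_zero)
      hflux_cont.integrableOn_Icc (fun k => periodic_rellichFlux (hup k) (hfp k) k)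
  rw [← sub_eq_zero, ← integral_sub (continuous_advection_mul_coordLaplacian hu hf).integrableOn_Icc
    (continuous_trace_mul_sub_dotProduct_mulVec hu hf).integrableOn_Icc, ← hflux]
  refine integral_congr_ae (.of_forall fun x => ?_)
  simp only [sum_partialDeriv_rellichFlux hu hf]
  ring

theorem integral_sum_advection_mul_coordLaplacian (hab : a ≤ b)
    {u : (Fin (n + 1) → ℝ) → Fin (n + 1) → ℝ} (hu : ContDiff ℝ 2 u)
    (hup : ∀ k, Function.Periodic u (Pi.single k (b k - a k))) :
    ∫ x in Set.Icc a b,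
        ∑ i, advection u (fun y => u y i) x * coordLaplacian (fun y => u y i) x =
      ∫ x in Set.Icc a b,
        ((jacobianMatrix u x).trace * (1 / 2 * (jacobianMatrix u x * (jacobianMatrix u x)ᵀ).trace)
          - (jacobianMatrix u x * (jacobianMatrix u x * (jacobianMatrix u x)ᵀ)).trace) := by
  have hu₁ : ContDiff ℝ 1 u := hu.of_le one_le_two
  have hui (i : Fin (n + 1)) : ContDiff ℝ 2 (fun y => u y i) := contDiff_pi.1 hu i
  have hpi (i k : Fin (n + 1)) : Function.Periodic (fun y => u y i) (Pi.single k (b k - a k)) :=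
    (hup k).comp fun v => v i
  rw [integral_finsetSum _ fun i _ =>
    (continuous_advection_mul_coordLaplacian hu₁ (hui i)).integrableOn_Icc]
  simp only [integral_advection_mul_coordLaplacian hab hu₁ hup (hui _) (hpi _)]
  rw [← integral_finsetSum _ fun i _ =>
    (continuous_trace_mul_sub_dotProduct_mulVec hu₁ (hui i)).integrableOn_Icc]
  simp only [← sum_dotProduct_self_row, ← sum_dotProduct_mulVec_row, Finset.sum_sub_distrib,
    Finset.mul_sum]
  rfl

end Integral

lemma Periodic2.periodic_single {f : (Fin 2 → ℝ) → ℝ} (hf : Periodic2 f) (k : Fin 2) :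
    Function.Periodic f (Pi.single k 1) := fun x => by
  convert hf x (Pi.single k 1) using 3
  ext i
  simp [Pi.single_apply]

open scoped Matrix in
theorem stmt7_general {a b : Fin 2 → ℝ} (hab : a ≤ b) {u : (Fin 2 → ℝ) → Fin 2 → ℝ}
    (hu : ContDiff ℝ 2 u) (hp : ∀ k, Function.Periodic u (Pi.single k (b k - a k))) :
    ∫ x in Set.Icc a b, ∑ i, advection u (fun y => u y i) x * coordLaplacian (fun y => u y i) x =
      ∫ x in Set.Icc a b, (jacobianMatrix u x).trace * ((jacobianMatrix u x).det
        - 1 / 2 * (jacobianMatrix u x * (jacobianMatrix u x)ᵀ).trace) := by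
  rw [integral_sum_advection_mul_coordLaplacian hab hu hp]
  refine integral_congr_ae (.of_forall fun x => ?_)
  linear_combination -trace_mul_mul_transpose_fin_two (jacobianMatrix u x)

theorem stmt7
    (u : (Fin 2 → ℝ) → (Fin 2 → ℝ))
    (hu : ContDiff ℝ (⊤ : ℕ∞) u)
    (hp : ∀ i, Periodic2 (fun x => u x i))
    (hdiv : ∀ x, ∑ j : Fin 2, pd j (fun y => u y j) x = 0) :
    (∫ x in Q2, ∑ i : Fin 2,
        (∑ j : Fin 2, u x j * pd j (fun y => u y i) x)
          * (∑ j : Fin 2, pd j (pd j (fun y => u y i)) x)) = 0 := by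
  have hper (k : Fin 2) : Function.Periodic u (Pi.single k (1 - 0)) := fun x =>
    funext fun i => by simpa using (hp i).periodic_single k x
  have htrace (x : Fin 2 → ℝ) : (jacobianMatrix u x).trace = 0 := hdiv x
  exact (stmt7_general zero_le_one (mod_cast contDiff_infty.1 hu 2) hper).trans
    (by simp [htrace])
end

section
/- Let T > 0 and ν > 0. Let u : ℝ² × [0,T] → ℝ², ω : ℝ² × [0,T] → ℝ, and θ : ℝ² × [0,T] → ℝ be smooth functions, ℤ²-periodic in x, such that for every t the field u(·,t) is divergence-free, and pointwise on ℝ² × [0,T]: ∂_t ω + u·∇ω = ν ∂₁²ω + ∂₁θ (the anisotropic vorticity equation) and ∂_t θ + u·∇θ = 0. Then for every t ∈ [0,T]: ‖ω(t)‖_{L²}² + ν ∫₀ᵗ ‖∂₁ω(s)‖_{L²}² ds ≤ ‖ω(0)‖_{L²}² + (t/ν) ‖θ(0)‖_{L²}², where all norms are over Q = [0,1]². -/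
open MeasureTheory

/-!
Testing the transport equation `∂ₜf + v·∇f = F` with `2f` shows that `‖f‖²` grows at rate
`2 ∫ f F`, because the field `v` is divergence-free and so `∫ f (v·∇f) = ½ ∫ div (f² v) = 0` on the
torus. Hence `‖θ(t)‖` is constant. For `ω`, integrating by parts once in `x₁`,
`2 ∫ ω ∂₁(ν ∂₁ω + θ) = -2 ∫ ∂₁ω (ν ∂₁ω + θ) ≤ -ν ‖∂₁ω‖² + ν⁻¹ ‖θ‖²`
by Young's inequality: the viscosity in the `x₁` direction alone absorbs the buoyancy term because
that term is an `x₁`-derivative. Integrating in time gives the claim.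
-/

lemma intervalIntegral_setIntegral_eq_sub_of_hasDerivAt {X E : Type*} [TopologicalSpace X]
    [T2Space X] [MeasurableSpace X] [OpensMeasurableSpace X] {μ : Measure X} [SFinite μ]
    [IsFiniteMeasureOnCompacts μ] [NormedAddCommGroup E] [NormedSpace ℝ E] [CompleteSpace E]
    {K : Set X} (hK : IsCompact K) {g g' : ℝ → X → E} {a b : ℝ}
    (hderiv : ∀ s x, HasDerivAt (fun r => g r x) (g' s x) s)
    (hg' : Continuous fun q : ℝ × X => g' q.1 q.2)
    (ha : IntegrableOn (g a) K μ) (hb : IntegrableOn (g b) K μ) :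
    ∫ s in a..b, ∫ x in K, g' s x ∂μ = (∫ x in K, g b x ∂μ) - ∫ x in K, g a x ∂μ := by
  have hint : IntegrableOn (fun q : ℝ × X => g' q.1 q.2) (Set.uIoc a b ×ˢ K) (volume.prod μ) :=
    (hg'.continuousOn.integrableOn_compact (isCompact_uIcc.prod hK)).mono_set
      (Set.prod_mono_left Set.uIoc_subset_uIcc)
  have hftc (x : X) : ∫ s in a..b, g' s x = g b x - g a x :=
    intervalIntegral.integral_eq_sub_of_hasDerivAt (fun s _ => hderiv s x)
      ((hg'.comp (Continuous.prodMk_left x)).intervalIntegrable a b)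
  rw [intervalIntegral_integral_swap (by rwa [Measure.prod_restrict])]
  simp only [hftc, integral_sub hb ha]

lemma integral_Icc_fderiv_single_eq_zero {n : ℕ} {E : Type*} [NormedAddCommGroup E]
    [NormedSpace ℝ E] {f : (Fin (n + 1) → ℝ) → E} (j : Fin (n + 1))
    (hf : ContDiff ℝ 1 f) (hper : ∀ x, f (x + Pi.single j 1) = f x) :
    ∫ x in Set.Icc (0 : Fin (n + 1) → ℝ) 1, fderiv ℝ f x (Pi.single j 1) = 0 := by
  have hsum (x : Fin (n + 1) → ℝ) :
      ∑ i, (if i = j then fderiv ℝ f x else 0) (Pi.single i 1) = fderiv ℝ f x (Pi.single j 1) := by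
    rw [Finset.sum_eq_single j (fun i _ hi => by simp [hi]) (by simp), if_pos rfl]
  have hface (y : Fin n → ℝ) : f (j.insertNth 1 y) = f (j.insertNth 0 y) := by
    rw [← hper (j.insertNth 0 y)]
    congr 1
    ext k
    refine Fin.succAboveCases j ?_ (fun m => ?_) k <;> simp
  have hcont : Continuous fun x => fderiv ℝ f x (Pi.single j 1) :=
    (hf.continuous_fderiv one_ne_zero).clm_apply continuous_const
  -- The divergence theorem for the vector field `f eⱼ`.
  have hdiv := integral_divergence_of_hasFDerivAt_off_countable' (0 : Fin (n + 1) → ℝ) 1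
    zero_le_one (fun i => if i = j then f else 0) (fun i x => if i = j then fderiv ℝ f x else 0)
    ∅ Set.countable_empty
    (fun i => by split_ifs; exacts [hf.continuous.continuousOn, continuousOn_const])
    (fun x _ i => by
      split_ifs
      exacts [(hf.differentiable one_ne_zero x).hasFDerivAt, hasFDerivAt_const 0 x])
    (by simpa only [hsum] using hcont.continuousOn.integrableOn_compact isCompact_Icc)
  simp only [hsum] at hdiv
  rw [hdiv]
  refine Finset.sum_eq_zero fun i _ => ?_
  rcases eq_or_ne i j with rfl | hi
  · simp [hface]
  · simp [hi]

lemma continuous_deriv_left {E F : Type*} [NormedAddCommGroup E] [NormedSpace ℝ E]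
    [NormedAddCommGroup F] [NormedSpace ℝ F] {f : ℝ → E → F}
    (hf : ContDiff ℝ 1 fun q : ℝ × E => f q.1 q.2) :
    Continuous fun q : ℝ × E => deriv (fun r => f r q.2) q.1 := by
  have h : ContDiff ℝ 1 (Function.uncurry fun (q : ℝ × E) (r : ℝ) => f r q.2) :=
    hf.comp (contDiff_snd.prodMk (contDiff_snd.comp contDiff_fst))
  simp only [← fderiv_apply_one_eq_deriv]
  exact (h.fderiv_apply contDiff_fst contDiff_const (zero_add (1 : WithTop ℕ∞)).le).continuous

lemma neg_two_mul_mul_add_le {ν : ℝ} (hν : 0 < ν) (a b : ℝ) :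
    -(2 * ((ν * a + b) * a)) ≤ -ν * a ^ 2 + ν⁻¹ * b ^ 2 := by
  have hsq : 0 ≤ ν⁻¹ * (ν * a + b) ^ 2 := by positivity
  have hexpand : ν⁻¹ * (ν * a + b) ^ 2 = ν * a ^ 2 + 2 * a * b + ν⁻¹ * b ^ 2 := by
    field_simp
    ring
  linarith

section PartialDerivative

variable {f g : (Fin 2 → ℝ) → ℝ} {j : Fin 2}

lemma pd_mul {x : Fin 2 → ℝ} (hf : DifferentiableAt ℝ f x) (hg : DifferentiableAt ℝ g x) :
    pd j (fun y => f y * g y) x = f x * pd j g x + g x * pd j f x := by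
  simp [pd, fderiv_fun_mul hf hg]

lemma pd_const_mul_add {x : Fin 2 → ℝ} (c : ℝ) (hf : DifferentiableAt ℝ f x)
    (hg : DifferentiableAt ℝ g x) :
    pd j (fun y => c * f y + g y) x = c * pd j f x + pd j g x := by
  simp [pd, fderiv_fun_add (hf.const_mul c) hg, fderiv_const_mul hf]

lemma contDiff_pd_uncurry {P : Type*} [NormedAddCommGroup P] [NormedSpace ℝ P]
    {m n : WithTop ℕ∞} {F : P → (Fin 2 → ℝ) → ℝ} (j : Fin 2)
    (hF : ContDiff ℝ n fun q : P × (Fin 2 → ℝ) => F q.1 q.2) (hmn : m + 1 ≤ n) :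
    ContDiff ℝ m fun q : P × (Fin 2 → ℝ) => pd j (F q.1) q.2 := by
  have h : ContDiff ℝ n
      (Function.uncurry fun (q : P × (Fin 2 → ℝ)) (y : Fin 2 → ℝ) => F q.1 y) :=
    hF.comp ((contDiff_fst.comp contDiff_fst).prodMk contDiff_snd)
  exact h.fderiv_apply contDiff_snd contDiff_const hmn

lemma continuous_pd_uncurry {P : Type*} [NormedAddCommGroup P] [NormedSpace ℝ P]
    {F : P → (Fin 2 → ℝ) → ℝ} (j : Fin 2)
    (hF : ContDiff ℝ 1 fun q : P × (Fin 2 → ℝ) => F q.1 q.2) :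
    Continuous fun q : P × (Fin 2 → ℝ) => pd j (F q.1) q.2 :=
  (contDiff_pd_uncurry j hF (zero_add (1 : WithTop ℕ∞)).le).continuous

lemma contDiff_pd {m n : WithTop ℕ∞} (j : Fin 2) (hf : ContDiff ℝ n f) (hmn : m + 1 ≤ n) :
    ContDiff ℝ m (pd j f) :=
  (hf.fderiv_right hmn).clm_apply contDiff_const

lemma continuous_pd (j : Fin 2) (hf : ContDiff ℝ 1 f) : Continuous (pd j f) :=
  (contDiff_pd j hf (zero_add (1 : WithTop ℕ∞)).le).continuous

lemma Periodic2.pd (hf : Periodic2 f) (j : Fin 2) : Periodic2 (pd j f) := by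
  intro x k
  simp only [_root_.pd]
  rw [← fderiv_comp_add_right, funext fun y => hf y k]

lemma Periodic2.mul (hf : Periodic2 f) (hg : Periodic2 g) : Periodic2 fun y => f y * g y :=
  fun x k => congrArg₂ (· * ·) (hf x k) (hg x k)

lemma Periodic2.const_mul_add (c : ℝ) (hf : Periodic2 f) (hg : Periodic2 g) :
    Periodic2 fun y => c * f y + g y :=
  fun x k => congrArg₂ (c * · + ·) (hf x k) (hg x k)

lemma Periodic2.add_single (hf : Periodic2 f) (j : Fin 2) (x : Fin 2 → ℝ) :
    f (x + Pi.single j 1) = f x := by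
  rw [← hf x (Pi.single j 1)]
  congr 2
  ext i
  simp [Pi.single_apply]

end PartialDerivative

lemma isCompact_Q2 : IsCompact Q2 := isCompact_Icc

lemma integrableOn_Q2 {f : (Fin 2 → ℝ) → ℝ} (hf : Continuous f) : IntegrableOn f Q2 :=
  hf.continuousOn.integrableOn_compact isCompact_Q2

section Torus

variable {f g : (Fin 2 → ℝ) → ℝ} {v : (Fin 2 → ℝ) → Fin 2 → ℝ}

lemma integral_pd_eq_zero (j : Fin 2) (hf : ContDiff ℝ 1 f) (hfp : Periodic2 f) :
    ∫ x in Q2, pd j f x = 0 :=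
  integral_Icc_fderiv_single_eq_zero j hf (hfp.add_single j)

lemma integral_mul_pd_eq_neg (j : Fin 2) (hf : ContDiff ℝ 1 f) (hg : ContDiff ℝ 1 g)
    (hfp : Periodic2 f) (hgp : Periodic2 g) :
    ∫ x in Q2, f x * pd j g x = -∫ x in Q2, g x * pd j f x := by
  have h := integral_pd_eq_zero j (hf.mul hg) (hfp.mul hgp)
  simp only [pd_mul (hf.differentiable one_ne_zero _) (hg.differentiable one_ne_zero _)] at h
  rw [integral_add (integrableOn_Q2 (hf.continuous.fun_mul (continuous_pd j hg)))
    (integrableOn_Q2 (hg.continuous.fun_mul (continuous_pd j hf)))] at h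
  exact eq_neg_of_add_eq_zero_left h

lemma integral_advection_eq_zero (hg : ContDiff ℝ 1 g) (hgp : Periodic2 g)
    (hv : ContDiff ℝ 1 v) (hvp : ∀ i, Periodic2 fun x => v x i)
    (hdiv : ∀ x, ∑ j : Fin 2, pd j (fun y => v y j) x = 0) :
    ∫ x in Q2, ∑ j : Fin 2, v x j * pd j g x = 0 := by
  have hvj (j : Fin 2) : ContDiff ℝ 1 fun x => v x j := contDiff_pi.1 hv j
  calc ∫ x in Q2, ∑ j : Fin 2, v x j * pd j g x
      = ∑ j : Fin 2, ∫ x in Q2, v x j * pd j g x :=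
        integral_finsetSum _ fun j _ =>
          integrableOn_Q2 ((hvj j).continuous.mul (continuous_pd j hg))
    _ = ∑ j : Fin 2, -∫ x in Q2, g x * pd j (fun y => v y j) x :=
        Finset.sum_congr rfl fun j _ => integral_mul_pd_eq_neg j (hvj j) hg (hvp j) hgp
    _ = -∫ x in Q2, g x * ∑ j : Fin 2, pd j (fun y => v y j) x := by
        simp only [Finset.mul_sum]
        rw [Finset.sum_neg_distrib, integral_finsetSum _ fun j _ =>
          integrableOn_Q2 (hg.continuous.fun_mul (continuous_pd j (hvj j)))]
    _ = 0 := by simp [hdiv]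

lemma integral_mul_advection_eq_zero (hf : ContDiff ℝ 1 f) (hfp : Periodic2 f)
    (hv : ContDiff ℝ 1 v) (hvp : ∀ i, Periodic2 fun x => v x i)
    (hdiv : ∀ x, ∑ j : Fin 2, pd j (fun y => v y j) x = 0) :
    ∫ x in Q2, f x * ∑ j : Fin 2, v x j * pd j f x = 0 := by
  have hsq (x : Fin 2 → ℝ) : ∑ j : Fin 2, v x j * pd j (fun y => f y * f y) x
      = 2 * (f x * ∑ j : Fin 2, v x j * pd j f x) := by
    simp only [pd_mul (hf.differentiable one_ne_zero x) (hf.differentiable one_ne_zero x),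
      Fin.sum_univ_two]
    ring
  have h := integral_advection_eq_zero (hf.mul hf) (hfp.mul hfp) hv hvp hdiv
  simpa only [hsq, integral_const_mul, mul_eq_zero, two_ne_zero, false_or] using h

lemma two_mul_integral_mul_diffusion_le {ν : ℝ} (hν : 0 < ν) (j : Fin 2) (hf : ContDiff ℝ 2 f)
    (hg : ContDiff ℝ 1 g) (hfp : Periodic2 f) (hgp : Periodic2 g) :
    2 * ∫ x in Q2, f x * (ν * pd j (pd j f) x + pd j g x)
      ≤ -ν * (∫ x in Q2, pd j f x ^ 2) + ν⁻¹ * ∫ x in Q2, g x ^ 2 := by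
  have hf1 : ContDiff ℝ 1 f := hf.of_le one_le_two
  have hpd : ContDiff ℝ 1 (pd j f) := contDiff_pd j hf one_add_one_eq_two.le
  have hflux : ContDiff ℝ 1 fun x => ν * pd j f x + g x := (contDiff_const.mul hpd).add hg
  have hleft := integrableOn_Q2 ((hflux.continuous.fun_mul hpd.continuous).const_mul 2).fun_neg
  have hpdsq := integrableOn_Q2 ((hpd.continuous.fun_pow 2).const_mul (-ν))
  have hgsq := integrableOn_Q2 ((hg.continuous.fun_pow 2).const_mul ν⁻¹)
  calc 2 * ∫ x in Q2, f x * (ν * pd j (pd j f) x + pd j g x)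
      = 2 * ∫ x in Q2, f x * pd j (fun y => ν * pd j f y + g y) x := by
        simp only [pd_const_mul_add ν (hpd.differentiable one_ne_zero _)
          (hg.differentiable one_ne_zero _)]
    _ = ∫ x in Q2, -(2 * ((ν * pd j f x + g x) * pd j f x)) := by
        rw [integral_mul_pd_eq_neg j hf1 hflux hfp ((hfp.pd j).const_mul_add ν hgp),
          integral_neg, integral_const_mul, mul_neg]
    _ ≤ ∫ x in Q2, (-ν * pd j f x ^ 2 + ν⁻¹ * g x ^ 2) :=
        integral_mono hleft (Integrable.fun_add hpdsq hgsq) fun x => neg_two_mul_mul_add_le hν _ _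
    _ = -ν * (∫ x in Q2, pd j f x ^ 2) + ν⁻¹ * ∫ x in Q2, g x ^ 2 := by
        rw [integral_add hpdsq hgsq, integral_const_mul, integral_const_mul]

end Torus

lemma integral_sq_sub_integral_sq {f : ℝ → (Fin 2 → ℝ) → ℝ}
    (hf : ContDiff ℝ 1 fun q : ℝ × (Fin 2 → ℝ) => f q.1 q.2) (a b : ℝ) :
    (∫ x in Q2, f b x ^ 2) - ∫ x in Q2, f a x ^ 2
      = ∫ s in a..b, 2 * ∫ x in Q2, f s x * deriv (fun r => f r x) s := by
  have hderiv (s : ℝ) (x : Fin 2 → ℝ) :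
      HasDerivAt (fun r => f r x ^ 2) (2 * (f s x * deriv (fun r => f r x) s)) s := by
    have h : DifferentiableAt ℝ (fun r => f r x) s :=
      (hf.comp (contDiff_prodMk_left x)).differentiable one_ne_zero s
    simpa [mul_assoc] using h.hasDerivAt.fun_pow 2
  have hslice (s : ℝ) : IntegrableOn (fun x => f s x ^ 2) Q2 :=
    integrableOn_Q2 ((hf.continuous.comp (Continuous.prodMk_right s)).pow 2)
  simp only [← integral_const_mul]
  exact (intervalIntegral_setIntegral_eq_sub_of_hasDerivAt isCompact_Q2 hderiv
    ((hf.continuous.mul (continuous_deriv_left hf)).const_mul 2) (hslice a) (hslice b)).symm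

section Time

variable {T : ℝ} {f : ℝ → (Fin 2 → ℝ) → ℝ}

lemma integral_sq_eq_add_of_transport
    {F : ℝ → (Fin 2 → ℝ) → ℝ} {v : ℝ → (Fin 2 → ℝ) → Fin 2 → ℝ}
    (hf : ContDiff ℝ 1 fun q : ℝ × (Fin 2 → ℝ) => f q.1 q.2)
    (hfp : ∀ t ∈ Set.Icc 0 T, Periodic2 (f t))
    (hv : ∀ t ∈ Set.Icc 0 T, ContDiff ℝ 1 (v t))
    (hvp : ∀ t ∈ Set.Icc 0 T, ∀ i, Periodic2 fun x => v t x i)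
    (hdiv : ∀ t ∈ Set.Icc 0 T, ∀ x, ∑ j : Fin 2, pd j (fun y => v t y j) x = 0)
    (htransport : ∀ t ∈ Set.Icc 0 T, ∀ x,
      deriv (fun s => f s x) t + ∑ j : Fin 2, v t x j * pd j (f t) x = F t x)
    {t : ℝ} (ht : t ∈ Set.Icc 0 T) :
    ∫ x in Q2, f t x ^ 2
      = (∫ x in Q2, f 0 x ^ 2) + ∫ s in (0 : ℝ)..t, 2 * ∫ x in Q2, f s x * F s x := by
  rw [← sub_eq_iff_eq_add', integral_sq_sub_integral_sq hf]
  refine intervalIntegral.integral_congr fun s hst => ?_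
  have hs : s ∈ Set.Icc 0 T := by
    rw [Set.uIcc_of_le ht.1] at hst
    exact ⟨hst.1, hst.2.trans ht.2⟩
  have hfs : ContDiff ℝ 1 (f s) := hf.comp (contDiff_prodMk_right s)
  have htime : Continuous fun x => f s x * deriv (fun r => f r x) s :=
    hfs.continuous.mul ((continuous_deriv_left hf).comp (Continuous.prodMk_right s))
  have hadv : Continuous fun x => f s x * ∑ j : Fin 2, v s x j * pd j (f s) x :=
    hfs.continuous.mul <| continuous_finsetSum _ fun j _ =>
      (contDiff_pi.1 (hv s hs) j).continuous.mul (continuous_pd j hfs)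
  simp only [← htransport s hs, mul_add]
  rw [integral_add (integrableOn_Q2 htime) (integrableOn_Q2 hadv),
    integral_mul_advection_eq_zero hfs (hfp s hs) (hv s hs) (hvp s hs) (hdiv s hs), mul_add,
    mul_zero, add_zero]

lemma intervalIntegral_mul_diffusion_le {ν E : ℝ} (hν : 0 < ν) (hT : 0 ≤ T) (j : Fin 2)
    {g : ℝ → (Fin 2 → ℝ) → ℝ}
    (hf : ContDiff ℝ 2 fun q : ℝ × (Fin 2 → ℝ) => f q.1 q.2)
    (hg : ContDiff ℝ 1 fun q : ℝ × (Fin 2 → ℝ) => g q.1 q.2)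
    (hfp : ∀ t ∈ Set.Icc 0 T, Periodic2 (f t)) (hgp : ∀ t ∈ Set.Icc 0 T, Periodic2 (g t))
    (hE : ∀ t ∈ Set.Icc 0 T, ∫ x in Q2, g t x ^ 2 ≤ E) :
    ∫ t in (0 : ℝ)..T, 2 * ∫ x in Q2, f t x * (ν * pd j (pd j (f t)) x + pd j (g t) x)
      ≤ -ν * (∫ t in (0 : ℝ)..T, ∫ x in Q2, pd j (f t) x ^ 2) + T / ν * E := by
  have hpdf : ContDiff ℝ 1 fun q : ℝ × (Fin 2 → ℝ) => pd j (f q.1) q.2 :=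
    contDiff_pd_uncurry j hf one_add_one_eq_two.le
  have hflux : Continuous fun q : ℝ × (Fin 2 → ℝ) =>
      ν * pd j (pd j (f q.1)) q.2 + pd j (g q.1) q.2 :=
    ((continuous_pd_uncurry (F := fun t => pd j (f t)) j hpdf).const_mul ν).add
      (continuous_pd_uncurry j hg)
  have hwork : Continuous fun t =>
      2 * ∫ x in Q2, f t x * (ν * pd j (pd j (f t)) x + pd j (g t) x) :=
    (continuous_parametric_integral_of_continuous (hf.continuous.mul hflux)
      isCompact_Q2).const_mul 2
  have hdissipation : Continuous fun t => -ν * ∫ x in Q2, pd j (f t) x ^ 2 :=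
    (continuous_parametric_integral_of_continuous (f := fun t x => pd j (f t) x ^ 2)
      (hpdf.continuous.fun_pow 2) isCompact_Q2).const_mul (-ν)
  calc ∫ t in (0 : ℝ)..T, 2 * ∫ x in Q2, f t x * (ν * pd j (pd j (f t)) x + pd j (g t) x)
      ≤ ∫ t in (0 : ℝ)..T, (-ν * (∫ x in Q2, pd j (f t) x ^ 2) + ν⁻¹ * E) := by
        refine intervalIntegral.integral_mono_on hT (hwork.intervalIntegrable 0 T)
          ((hdissipation.add continuous_const).intervalIntegrable 0 T) fun t ht => ?_
        grw [← hE t ht]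
        exact two_mul_integral_mul_diffusion_le hν j (hf.comp (contDiff_prodMk_right t))
          (hg.comp (contDiff_prodMk_right t)) (hfp t ht) (hgp t ht)
    _ = -ν * (∫ t in (0 : ℝ)..T, ∫ x in Q2, pd j (f t) x ^ 2) + T / ν * E := by
        rw [intervalIntegral.integral_add (hdissipation.intervalIntegrable 0 T)
          intervalIntegrable_const, intervalIntegral.integral_const_mul,
          intervalIntegral.integral_const, sub_zero, smul_eq_mul, div_eq_mul_inv, mul_assoc]

end Time

theorem stmt10_general {T ν : ℝ} (hν : 0 < ν)
    {u : ℝ → (Fin 2 → ℝ) → Fin 2 → ℝ} {ω θ : ℝ → (Fin 2 → ℝ) → ℝ}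
    (hu : ∀ t ∈ Set.Icc 0 T, ContDiff ℝ 1 (u t))
    (hω : ContDiff ℝ 2 fun q : ℝ × (Fin 2 → ℝ) => ω q.1 q.2)
    (hθ : ContDiff ℝ 1 fun q : ℝ × (Fin 2 → ℝ) => θ q.1 q.2)
    (hup : ∀ t ∈ Set.Icc 0 T, ∀ i, Periodic2 fun x => u t x i)
    (hωp : ∀ t ∈ Set.Icc 0 T, Periodic2 (ω t)) (hθp : ∀ t ∈ Set.Icc 0 T, Periodic2 (θ t))
    (hdiv : ∀ t ∈ Set.Icc 0 T, ∀ x, ∑ j : Fin 2, pd j (fun y => u t y j) x = 0)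
    (hvort : ∀ t ∈ Set.Icc 0 T, ∀ x,
      deriv (fun s => ω s x) t + ∑ j : Fin 2, u t x j * pd j (ω t) x
        = ν * pd 0 (pd 0 (ω t)) x + pd 0 (θ t) x)
    (htheta : ∀ t ∈ Set.Icc 0 T, ∀ x,
      deriv (fun s => θ s x) t + ∑ j : Fin 2, u t x j * pd j (θ t) x = 0)
    {t : ℝ} (ht : t ∈ Set.Icc 0 T) :
    (∫ x in Q2, ω t x ^ 2) + ν * ∫ s in (0 : ℝ)..t, ∫ x in Q2, pd 0 (ω s) x ^ 2
      ≤ (∫ x in Q2, ω 0 x ^ 2) + t / ν * ∫ x in Q2, θ 0 x ^ 2 := by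
  have hθ_const (s : ℝ) (hs : s ∈ Set.Icc 0 T) :
      ∫ x in Q2, θ s x ^ 2 = ∫ x in Q2, θ 0 x ^ 2 := by
    simpa using integral_sq_eq_add_of_transport (F := 0) hθ hθp hu hup hdiv htheta hs
  have hω_energy := integral_sq_eq_add_of_transport (hω.of_le one_le_two) hωp hu hup hdiv hvort ht
  have hsub : Set.Icc 0 t ⊆ Set.Icc 0 T := Set.Icc_subset_Icc_right ht.2
  have hdissipation := intervalIntegral_mul_diffusion_le hν ht.1 0 hω hθ
    (fun s hs => hωp s (hsub hs)) (fun s hs => hθp s (hsub hs))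
    (fun s hs => (hθ_const s (hsub hs)).le)
  linarith

theorem stmt10
    (T ν : ℝ) (hT : 0 < T) (hν : 0 < ν)
    (u : ℝ → (Fin 2 → ℝ) → (Fin 2 → ℝ)) (ω θ : ℝ → (Fin 2 → ℝ) → ℝ)
    (hu : ContDiff ℝ (⊤ : ℕ∞) (fun q : ℝ × (Fin 2 → ℝ) => u q.1 q.2))
    (hω : ContDiff ℝ (⊤ : ℕ∞) (fun q : ℝ × (Fin 2 → ℝ) => ω q.1 q.2))
    (hθ : ContDiff ℝ (⊤ : ℕ∞) (fun q : ℝ × (Fin 2 → ℝ) => θ q.1 q.2))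
    (hup : ∀ t i, Periodic2 (fun x => u t x i))
    (hωp : ∀ t, Periodic2 (ω t)) (hθp : ∀ t, Periodic2 (θ t))
    (hdiv : ∀ t x, ∑ j : Fin 2, pd j (fun y => u t y j) x = 0)
    (hvort : ∀ t ∈ Set.Icc (0 : ℝ) T, ∀ x,
      deriv (fun s => ω s x) t + ∑ j : Fin 2, u t x j * pd j (ω t) x
        = ν * pd 0 (pd 0 (ω t)) x + pd 0 (θ t) x)
    (htheta : ∀ t ∈ Set.Icc (0 : ℝ) T, ∀ x,
      deriv (fun s => θ s x) t + ∑ j : Fin 2, u t x j * pd j (θ t) x = 0) :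
    ∀ t ∈ Set.Icc (0 : ℝ) T,
      (∫ x in Q2, (ω t x) ^ 2)
          + ν * ∫ s in (0 : ℝ)..t, (∫ x in Q2, (pd 0 (ω s) x) ^ 2)
        ≤ (∫ x in Q2, (ω 0 x) ^ 2) + (t / ν) * ∫ x in Q2, (θ 0 x) ^ 2 :=
  fun _ ht => stmt10_general hν
    (fun t _ => mod_cast contDiff_infty.1 (hu.comp (contDiff_prodMk_right t)) 1)
    (mod_cast contDiff_infty.1 hω 2) (mod_cast contDiff_infty.1 hθ 1) (fun t _ => hup t)
    (fun t _ => hωp t) (fun t _ => hθp t) (fun t _ => hdiv t) hvort htheta ht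
end
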